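/- Let c > 0 and let F : ℝ → ℝ be infinitely differentiable. Then the antisymmetric wave u(t,x) = (F(t - |x|/c) - F(t + |x|/c))/(2|x|), defined for x ≠ 0, extends to an infinitely differentiable function on all of ℝ × ℝ³ (taking the value -(1/c) F'(t) at x = 0), and this extension satisfies the homogeneous wave equation Δu - (1/c²) ∂²u/∂t² = 0 at every point of ℝ × ℝ³. -/

import Mathlib

/-!
The extension is `u(t, x) = -(1/2c) ∫_{-1}^{1} F'(t + s|x|/c) ds`, which for `x ≠ 0` is the
antisymmetric wave by the fundamental theorem of calculus and at `x = 0` is `-(1/c) F'(t)`.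

Smoothness and the wave equation both come from enlarging the family of integrals to
`V k F (t, x) = ∫_{-1}^{1} (1 - s²)^k F(t + s|x|/c) ds` (`radialAvg`). Since `s (1 - s²)^k` is, up to
a constant, the derivative of `(1 - s²)^(k+1)`, an integration by parts (`waveAvg_radial`) gives
`∂ₜ V k F = V k F'` and `∇ₓ V k F = x / (2 (k+1) c²) · V (k+1) F''`,
without any singular factor (`hasFDerivAt_radialAvg`). The family is therefore closed under
differentiation up to smooth coefficients, and induction on the order shows that each member is
`C^n` for every `n`. The same formulas express the Laplacian of `V 0 F` through `V 1 F''` and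
`V 2 F''''`; two further integrations by parts (`waveAvg_wave`) identify it with `V 0 F'' / c²`.
-/

noncomputable section

/-- Partial derivative of `u : ℝ → ℝ³ → ℝ` with respect to the `i`-th spatial coordinate. -/
def spatialDeriv (i : Fin 3) (u : ℝ → EuclideanSpace ℝ (Fin 3) → ℝ) :
    ℝ → EuclideanSpace ℝ (Fin 3) → ℝ :=
  fun t x => deriv (fun s : ℝ => u t (x + s • EuclideanSpace.single i (1 : ℝ))) 0

/-- The flat-space Laplacian acting in the spatial variables. -/
def spatialLaplacian (u : ℝ → EuclideanSpace ℝ (Fin 3) → ℝ) :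
    ℝ → EuclideanSpace ℝ (Fin 3) → ℝ :=
  fun t x => ∑ i : Fin 3, spatialDeriv i (spatialDeriv i u) t x

/-- The second time derivative `∂²u/∂t²`. -/
def timeDeriv2 (u : ℝ → EuclideanSpace ℝ (Fin 3) → ℝ) :
    ℝ → EuclideanSpace ℝ (Fin 3) → ℝ :=
  fun t x => deriv (deriv fun s : ℝ => u s x) t

/-! ### Weighted averages of translates -/

/-- `∫_{-1}^{1} g(s) F(t + sρ) ds` at `p = (t, ρ)`: a superposition of the translates of `F`
with weight `g`. -/
def waveAvg (g F : ℝ → ℝ) (p : ℝ × ℝ) : ℝ := ∫ s in (-1 : ℝ)..1, g s * F (p.1 + s * p.2)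

/-- `∫_{-1}^{1} (1 - s²)^k F(t + s|x|/c) ds` at `p = (t, x)`. -/
def radialAvg (c : ℝ) (k : ℕ) (F : ℝ → ℝ) (p : ℝ × EuclideanSpace ℝ (Fin 3)) : ℝ :=
  waveAvg (fun s => (1 - s ^ 2) ^ k) F (p.1, ‖p.2‖ / c)

/-- Differentiation under the integral sign. -/
lemma hasFDerivAt_waveAvg {g F : ℝ → ℝ} (hg : Continuous g) (hF : ContDiff ℝ 1 F) (p : ℝ × ℝ) :
    HasFDerivAt (waveAvg g F)
      (waveAvg g (deriv F) p • ContinuousLinearMap.fst ℝ ℝ ℝ +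
        waveAvg (fun s => s * g s) (deriv F) p • ContinuousLinearMap.snd ℝ ℝ ℝ) p := by
  have hF0 : Continuous F := hF.continuous
  have hF1 : Continuous (deriv F) := hF.continuous_deriv le_rfl
  set D : ℝ × ℝ → ℝ → (ℝ × ℝ →L[ℝ] ℝ) := fun q s =>
    (g s * deriv F (q.1 + s * q.2)) • ContinuousLinearMap.fst ℝ ℝ ℝ +
      (s * g s * deriv F (q.1 + s * q.2)) • ContinuousLinearMap.snd ℝ ℝ ℝ with hD
  have hDc : Continuous (fun z : (ℝ × ℝ) × ℝ => D z.1 z.2) := by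
    simp only [hD]; fun_prop
  obtain ⟨C, hC⟩ := ((isCompact_closedBall p 1).prod
    (isCompact_Icc (a := (-1 : ℝ)) (b := 1))).exists_bound_of_continuousOn hDc.continuousOn
  have key := intervalIntegral.hasFDerivAt_integral_of_dominated_of_fderiv_le
    (𝕜 := ℝ) (μ := MeasureTheory.volume) (a := -1) (b := 1)
    (F := fun q s => g s * F (q.1 + s * q.2)) (F' := D) (bound := fun _ => C)
    (x₀ := p) (Metric.closedBall_mem_nhds p one_pos)
    (Filter.Eventually.of_forall fun q => by
      have : Continuous fun s => g s * F (q.1 + s * q.2) := by fun_prop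
      exact this.aestronglyMeasurable)
    (by
      have : Continuous fun s => g s * F (p.1 + s * p.2) := by fun_prop
      exact this.intervalIntegrable _ _)
    (by
      have : Continuous (D p) := by simp only [hD]; fun_prop
      exact this.aestronglyMeasurable)
    (Filter.Eventually.of_forall fun s hs q hq => hC (q, s) ⟨hq, by
      rw [Set.uIoc_of_le (by norm_num)] at hs
      exact ⟨hs.1.le, hs.2⟩⟩)
    intervalIntegrable_const
    (Filter.Eventually.of_forall fun s _ q _ => by
      have h1 : HasDerivAt F (deriv F (q.1 + s * q.2)) (q.1 + s * q.2) :=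
        (hF.differentiable one_ne_zero _).hasDerivAt
      have h2 : HasFDerivAt (fun q : ℝ × ℝ => q.1 + s * q.2)
          (ContinuousLinearMap.fst ℝ ℝ ℝ + s • ContinuousLinearMap.snd ℝ ℝ ℝ) q :=
        hasFDerivAt_fst.add (hasFDerivAt_snd.const_mul s)
      refine ((h1.comp_hasFDerivAt q h2).const_mul (g s)).congr_fderiv ?_
      ext <;> simp [hD]; ring)
  refine key.congr_fderiv ?_
  have i1 : Continuous fun s => g s * deriv F (p.1 + s * p.2) := by fun_prop
  have i2 : Continuous fun s => s * g s * deriv F (p.1 + s * p.2) := by fun_prop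
  simp only [hD, waveAvg]
  rw [intervalIntegral.integral_add, intervalIntegral.integral_smul_const,
    intervalIntegral.integral_smul_const]
  · exact (i1.smul continuous_const).intervalIntegrable _ _
  · exact (i2.smul continuous_const).intervalIntegrable _ _

/-- Integration by parts against a weight vanishing at both endpoints. -/
lemma waveAvg_parts {g g' F : ℝ → ℝ} (hg : ∀ s, HasDerivAt g (g' s) s) (hg' : Continuous g')
    (h1 : g 1 = 0) (h2 : g (-1) = 0) (hF : ContDiff ℝ 1 F) (p : ℝ × ℝ) :
    p.2 * waveAvg g (deriv F) p = - waveAvg g' F p := by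
  have hF0 : Continuous F := hF.continuous
  have hF1 : Continuous (deriv F) := hF.continuous_deriv le_rfl
  have hd : ∀ s ∈ Set.uIcc (-1 : ℝ) 1,
      HasDerivAt (fun s => F (p.1 + s * p.2)) (deriv F (p.1 + s * p.2) * p.2) s := by
    intro s _
    have h3 : HasDerivAt (fun s => p.1 + s * p.2) p.2 s := by
      simpa using ((hasDerivAt_id s).mul_const p.2).const_add p.1
    exact ((hF.differentiable one_ne_zero _).hasDerivAt).comp s h3
  have := intervalIntegral.integral_mul_deriv_eq_deriv_mul (fun s _ => hg s) hd
    (hg'.intervalIntegrable _ _)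
    (by
      have : Continuous fun s => deriv F (p.1 + s * p.2) * p.2 := by fun_prop
      exact this.intervalIntegrable _ _)
  rw [h1, h2] at this
  simp only [waveAvg]
  rw [← intervalIntegral.integral_const_mul]
  simp only [zero_mul, sub_zero, zero_sub] at this
  rw [← this]
  congr 1; ext s; ring

/-- The `ρ`-derivative of the average with weight `(1 - s²)^k` is `ρ` times an average of the
same kind; this is what removes the singularity of `|x|` at the origin. -/
lemma waveAvg_radial {F : ℝ → ℝ} (hF : ContDiff ℝ 1 F) (k : ℕ) (p : ℝ × ℝ) :
    waveAvg (fun s => s * (1 - s ^ 2) ^ k) F p =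
      p.2 / (2 * (k + 1)) * waveAvg (fun s => (1 - s ^ 2) ^ (k + 1)) (deriv F) p := by
  have h := waveAvg_parts (g := fun s => (1 - s ^ 2) ^ (k + 1))
    (g' := fun s => (-(2 * ((k : ℝ) + 1))) * (s * (1 - s ^ 2) ^ k))
    (fun s => by
      have h3 : HasDerivAt (fun s : ℝ => 1 - s ^ 2) (-(2 * s)) s := by
        simpa using (hasDerivAt_pow 2 s).const_sub 1
      refine (h3.pow (k + 1)).congr_deriv ?_
      push_cast
      ring)
    (by fun_prop) (by simp) (by simp) hF p
  have h4 : waveAvg (fun s => (-(2 * ((k : ℝ) + 1))) * (s * (1 - s ^ 2) ^ k)) F p =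
      (-(2 * ((k : ℝ) + 1))) * waveAvg (fun s => s * (1 - s ^ 2) ^ k) F p := by
    simp only [waveAvg]
    rw [← intervalIntegral.integral_const_mul]
    congr 1; ext s; ring
  rw [h4] at h
  have : (k : ℝ) + 1 ≠ 0 := by positivity
  field_simp
  linarith

/-! ### Smoothness of the radial averages -/

/-- A function of `(t, |x|/c)` whose radial derivative is `ρ * b` is differentiable in `(t, x)`
everywhere, including at `x = 0`. -/
lemma hasFDerivAt_comp_norm {c : ℝ} (hc : 0 < c) {w : ℝ × ℝ → ℝ} {a b : ℝ}
    (p : ℝ × EuclideanSpace ℝ (Fin 3))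
    (hw : HasFDerivAt w (a • ContinuousLinearMap.fst ℝ ℝ ℝ +
      ((‖p.2‖ / c) * b) • ContinuousLinearMap.snd ℝ ℝ ℝ) (p.1, ‖p.2‖ / c)) :
    HasFDerivAt (fun q : ℝ × EuclideanSpace ℝ (Fin 3) => w (q.1, ‖q.2‖ / c))
      (a • ContinuousLinearMap.fst ℝ ℝ (EuclideanSpace ℝ (Fin 3)) +
        (b / c ^ 2) • (innerSL ℝ p.2).comp
          (ContinuousLinearMap.snd ℝ ℝ (EuclideanSpace ℝ (Fin 3)))) p := by
  obtain ⟨t, x⟩ := p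
  by_cases hx : x = 0
  · -- The chain rule fails here as the norm is not differentiable; it is only Lipschitz, which
    -- suffices because the radial derivative of `w` vanishes.
    subst hx
    simp only [norm_zero, zero_div, zero_mul, zero_smul, add_zero] at hw
    rw [hasFDerivAt_iff_isLittleO] at hw ⊢
    have hcont : Filter.Tendsto (fun q : ℝ × EuclideanSpace ℝ (Fin 3) => (q.1, ‖q.2‖ / c))
        (nhds (t, 0)) (nhds (t, 0)) := by
      have : Continuous fun q : ℝ × EuclideanSpace ℝ (Fin 3) => (q.1, ‖q.2‖ / c) := by fun_prop
      simpa using this.tendsto (t, 0)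
    have h1 := hw.comp_tendsto hcont
    have h2 : ((fun q : ℝ × ℝ => q - (t, 0)) ∘
        fun q : ℝ × EuclideanSpace ℝ (Fin 3) => (q.1, ‖q.2‖ / c)) =O[nhds (t, 0)]
        fun q => q - (t, 0) := by
      refine Asymptotics.IsBigO.of_bound (1 + 1 / c) (Filter.Eventually.of_forall fun q => ?_)
      have h3 : ‖q.1 - t‖ ≤ ‖q - (t, 0)‖ := norm_fst_le (q - (t, 0))
      have h4 : ‖q.2‖ ≤ ‖q - (t, 0)‖ := by
        have h := norm_snd_le (q - (t, 0))
        rwa [Prod.snd_sub, sub_zero] at h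
      have h5 : ‖((q.1, ‖q.2‖ / c) : ℝ × ℝ) - (t, 0)‖ ≤ ‖q.1 - t‖ + ‖q.2‖ / c := by
        rw [Prod.norm_def]
        simp only [Prod.fst_sub, Prod.snd_sub, sub_zero, norm_div, norm_norm,
          Real.norm_of_nonneg hc.le]
        exact max_le (le_add_of_nonneg_right (by positivity))
          (le_add_of_nonneg_left (by positivity))
      have h6 : ‖q.2‖ / c ≤ ‖q - (t, 0)‖ / c := by gcongr
      calc _ ≤ _ := h5
        _ ≤ ‖q - (t, 0)‖ + ‖q - (t, 0)‖ / c := add_le_add h3 h6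
        _ = _ := by ring
    refine (h1.trans_isBigO h2).congr_left fun q => ?_
    simp
  · have hn : ‖x‖ ≠ 0 := norm_ne_zero_iff.mpr hx
    have hnorm : HasFDerivAt (fun y : EuclideanSpace ℝ (Fin 3) => ‖y‖)
        ((1 / ‖x‖) • innerSL ℝ x) x := by
      have h := ((hasStrictFDerivAt_norm_sq x).hasFDerivAt).sqrt (by positivity)
      simp only [Real.sqrt_sq (norm_nonneg _)] at h
      refine h.congr_fderiv ?_
      ext y
      simp
      field_simp
    have h2 : HasFDerivAt (fun q : ℝ × EuclideanSpace ℝ (Fin 3) => (q.1, ‖q.2‖ / c))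
        ((ContinuousLinearMap.fst ℝ ℝ _).prod
          (c⁻¹ • (((1 / ‖x‖) • innerSL ℝ x).comp (ContinuousLinearMap.snd ℝ ℝ _)))) (t, x) := by
      refine hasFDerivAt_fst.prodMk ?_
      have h3 := (HasFDerivAt.comp (t, x) (f := Prod.snd) hnorm hasFDerivAt_snd).const_mul c⁻¹
      refine h3.congr_of_eventuallyEq (Filter.Eventually.of_forall fun q => ?_)
      simp [div_eq_inv_mul]
    refine (HasFDerivAt.comp (t, x) hw h2).congr_fderiv ?_
    ext y <;> simp
    field_simp

lemma hasFDerivAt_radialAvg {c : ℝ} (hc : 0 < c) {F : ℝ → ℝ} (hF : ContDiff ℝ 2 F) (k : ℕ)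
    (p : ℝ × EuclideanSpace ℝ (Fin 3)) :
    HasFDerivAt (radialAvg c k F)
      (radialAvg c k (deriv F) p • ContinuousLinearMap.fst ℝ ℝ (EuclideanSpace ℝ (Fin 3)) +
        (radialAvg c (k + 1) (deriv (deriv F)) p / (2 * (k + 1)) / c ^ 2) • (innerSL ℝ p.2).comp
          (ContinuousLinearMap.snd ℝ ℝ (EuclideanSpace ℝ (Fin 3)))) p := by
  refine hasFDerivAt_comp_norm hc (w := waveAvg (fun s => (1 - s ^ 2) ^ k) F) p ?_
  refine (hasFDerivAt_waveAvg (by fun_prop) (hF.of_le one_le_two) _).congr_fderiv ?_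
  rw [waveAvg_radial (ContDiff.deriv' (n := 1) (by simpa [one_add_one_eq_two] using hF))]
  simp only [radialAvg]
  congr 2
  ring

lemma two_le_smooth : (2 : WithTop ℕ∞) ≤ ((⊤ : ℕ∞) : WithTop ℕ∞) :=
  WithTop.coe_le_coe.mpr (le_top : (2 : ℕ∞) ≤ ⊤)

lemma contDiff_deriv_smooth {F : ℝ → ℝ} (hF : ContDiff ℝ (⊤ : ℕ∞) F) :
    ContDiff ℝ (⊤ : ℕ∞) (deriv F) := (contDiff_infty_iff_deriv.mp hF).2

/-- Induction on the order: the derivative of a radial average is again built from radial averages,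
namely of `F'` with the same `k` and of `F''` with `k + 1`. -/
lemma contDiff_radialAvg_nat {c : ℝ} (hc : 0 < c) (n : ℕ) : ∀ {F : ℝ → ℝ} (k : ℕ),
    ContDiff ℝ (⊤ : ℕ∞) F → ContDiff ℝ n (radialAvg c k F) := by
  induction n with
  | zero =>
    intro F k hF
    exact contDiff_zero.mpr (continuous_iff_continuousAt.mpr fun p =>
      (hasFDerivAt_radialAvg hc (hF.of_le two_le_smooth) k p).continuousAt)
  | succ n ih =>
    intro F k hF
    have h1 := ih k (contDiff_deriv_smooth hF)
    have h2 := ih (k + 1) (contDiff_deriv_smooth (contDiff_deriv_smooth hF))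
    push_cast
    rw [contDiff_succ_iff_hasFDerivAt]
    refine ⟨_, ?_, fun p => hasFDerivAt_radialAvg hc (hF.of_le two_le_smooth) k p⟩
    refine (h1.smul contDiff_const).add (((h2.div_const _).div_const _).smul ?_)
    exact ((innerSL ℝ).contDiff.comp contDiff_snd).clm_comp contDiff_const

lemma contDiff_radialAvg {c : ℝ} (hc : 0 < c) {F : ℝ → ℝ} (hF : ContDiff ℝ (⊤ : ℕ∞) F) (k : ℕ) :
    ContDiff ℝ (⊤ : ℕ∞) (radialAvg c k F) :=
  contDiff_infty.mpr fun n => contDiff_radialAvg_nat hc n k hF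

/-! ### The wave equation -/

/-- The case in which the integral can be evaluated: the average of `F'` with weight `1`. -/
lemma waveAvg_one_deriv {F : ℝ → ℝ} (hF : ContDiff ℝ 1 F) (p : ℝ × ℝ) :
    p.2 * waveAvg (fun _ => 1) (deriv F) p = F (p.1 + p.2) - F (p.1 - p.2) := by
  have hF1 : Continuous (deriv F) := hF.continuous_deriv le_rfl
  have h := intervalIntegral.integral_eq_sub_of_hasDerivAt (a := -1) (b := 1)
    (f := fun s => F (p.1 + s * p.2)) (f' := fun s => deriv F (p.1 + s * p.2) * p.2)
    (fun s _ => by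
      have h3 : HasDerivAt (fun s => p.1 + s * p.2) p.2 s := by
        simpa using ((hasDerivAt_id s).mul_const p.2).const_add p.1
      exact ((hF.differentiable one_ne_zero _).hasDerivAt).comp s h3)
    (by
      have : Continuous fun s => deriv F (p.1 + s * p.2) * p.2 := by fun_prop
      exact this.intervalIntegrable _ _)
  simp only [one_mul, neg_one_mul, ← sub_eq_add_neg] at h
  rw [← h, waveAvg, ← intervalIntegral.integral_const_mul]
  congr 1; ext s; ring

/-- The identity between averages to which the wave equation reduces: two integrations by parts
turn `(1 - s²)²` into `12 s² - 4`, and `3/2 (1 - s²) + (12 s² - 4)/8 = 1`. -/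
lemma waveAvg_wave {G : ℝ → ℝ} (hG : ContDiff ℝ 2 G) (p : ℝ × ℝ) :
    3 / 2 * waveAvg (fun s => (1 - s ^ 2) ^ 1) G p +
      p.2 ^ 2 / 8 * waveAvg (fun s => (1 - s ^ 2) ^ 2) (deriv (deriv G)) p =
      waveAvg (fun s => (1 - s ^ 2) ^ 0) G p := by
  have hG1 : ContDiff ℝ 1 (deriv G) :=
    ContDiff.deriv' (n := 1) (by simpa [one_add_one_eq_two] using hG)
  have hG0 : Continuous G := hG.continuous
  have e1 := waveAvg_parts (g := fun s => (1 - s ^ 2) ^ 2) (g' := fun s => 4 * s ^ 3 - 4 * s)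
    (fun s => by
      have h3 : HasDerivAt (fun s : ℝ => 1 - s ^ 2) (-(2 * s)) s := by
        simpa using (hasDerivAt_pow 2 s).const_sub 1
      refine (h3.pow 2).congr_deriv ?_
      simp; ring)
    (by fun_prop) (by simp) (by simp) hG1 p
  have e2 := waveAvg_parts (g := fun s => 4 * s ^ 3 - 4 * s) (g' := fun s => 12 * s ^ 2 - 4)
    (fun s => by
      refine (((hasDerivAt_pow 3 s).const_mul 4).sub ((hasDerivAt_id s).const_mul 4)).congr_deriv ?_
      simp; ring)
    (by fun_prop) (by norm_num) (by norm_num) (hG.of_le one_le_two) p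
  have e3 : p.2 ^ 2 * waveAvg (fun s => (1 - s ^ 2) ^ 2) (deriv (deriv G)) p =
      waveAvg (fun s => 12 * s ^ 2 - 4) G p := by
    linear_combination p.2 * e1 - e2
  have e4 : 3 / 2 * waveAvg (fun s => (1 - s ^ 2) ^ 1) G p +
      1 / 8 * waveAvg (fun s => 12 * s ^ 2 - 4) G p = waveAvg (fun s => (1 - s ^ 2) ^ 0) G p := by
    simp only [waveAvg]
    rw [← intervalIntegral.integral_const_mul, ← intervalIntegral.integral_const_mul,
      ← intervalIntegral.integral_add]
    · congr 1; ext s; ring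
    · exact Continuous.intervalIntegrable (by fun_prop) _ _
    · exact Continuous.intervalIntegrable (by fun_prop) _ _
  linear_combination e4 + e3 / 8

lemma hasDerivAt_radialAvg_space {c : ℝ} (hc : 0 < c) {F : ℝ → ℝ} (hF : ContDiff ℝ 2 F) (k : ℕ)
    (t : ℝ) (x : EuclideanSpace ℝ (Fin 3)) (i : Fin 3) :
    HasDerivAt (fun s : ℝ => radialAvg c k F (t, x + s • EuclideanSpace.single i (1 : ℝ)))
      (radialAvg c (k + 1) (deriv (deriv F)) (t, x) / (2 * (k + 1)) / c ^ 2 * x i) 0 := by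
  have h1 : HasDerivAt (fun s : ℝ => (t, x + s • EuclideanSpace.single i (1 : ℝ)))
      ((0 : ℝ), EuclideanSpace.single i (1 : ℝ)) 0 := by
    refine (hasDerivAt_const _ _).prodMk ?_
    simpa using ((hasDerivAt_id (0 : ℝ)).smul_const
      (EuclideanSpace.single i (1 : ℝ))).const_add x
  have h2 := hasFDerivAt_radialAvg hc hF k (t, x)
  have h3 := HasFDerivAt.comp_hasDerivAt (x := (0 : ℝ))
    (f := fun s : ℝ => (t, x + s • EuclideanSpace.single i (1 : ℝ)))
    (l := radialAvg c k F) (by simpa using h2) h1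
  refine h3.congr_deriv ?_
  simp [EuclideanSpace.inner_single_right]

lemma hasDerivAt_radialAvg_time {c : ℝ} (hc : 0 < c) {F : ℝ → ℝ} (hF : ContDiff ℝ 2 F) (k : ℕ)
    (t : ℝ) (x : EuclideanSpace ℝ (Fin 3)) :
    HasDerivAt (fun s : ℝ => radialAvg c k F (s, x)) (radialAvg c k (deriv F) (t, x)) t := by
  have h1 : HasDerivAt (fun s : ℝ => (s, x)) ((1 : ℝ), (0 : EuclideanSpace ℝ (Fin 3))) t :=
    (hasDerivAt_id t).prodMk (hasDerivAt_const _ _)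
  have h3 := HasFDerivAt.comp_hasDerivAt t (hasFDerivAt_radialAvg hc hF k (t, x)) h1
  refine h3.congr_deriv ?_
  simp

/-- The antisymmetric (half retarded minus half advanced) spherical wave
`(F(t - |x|/c) - F(t + |x|/c))/(2|x|)` extends to a smooth function on all of
`ℝ × ℝ³`, taking the value `-(1/c) F'(t)` at `x = 0`, and the extension satisfies
the homogeneous wave equation everywhere (cf. Theorem 6, Eq. (19) of the paper). -/
theorem antisymmetric_wave_smooth_and_solves_wave_equation
    (c : ℝ) (hc : 0 < c) (F : ℝ → ℝ) (hF : ContDiff ℝ (⊤ : ℕ∞) F) :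
    ∃ u : ℝ → EuclideanSpace ℝ (Fin 3) → ℝ,
      (∀ (t : ℝ) (x : EuclideanSpace ℝ (Fin 3)), x ≠ 0 →
        u t x = (F (t - ‖x‖ / c) - F (t + ‖x‖ / c)) / (2 * ‖x‖)) ∧
      (∀ t : ℝ, u t 0 = -(1 / c) * deriv F t) ∧
      ContDiff ℝ (⊤ : ℕ∞) (fun p : ℝ × EuclideanSpace ℝ (Fin 3) => u p.1 p.2) ∧
      (∀ (t : ℝ) (x : EuclideanSpace ℝ (Fin 3)),
        spatialLaplacian u t x - (1 / c ^ 2) * timeDeriv2 u t x = 0) := by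
  have low : ∀ {H : ℝ → ℝ}, ContDiff ℝ (⊤ : ℕ∞) H → ContDiff ℝ 2 H :=
    fun h => h.of_le two_le_smooth
  have s1 := contDiff_deriv_smooth hF
  have s2 := contDiff_deriv_smooth s1
  have s3 := contDiff_deriv_smooth s2
  refine ⟨fun t x => -(1 / (2 * c)) * radialAvg c 0 (deriv F) (t, x), ?_, ?_, ?_, ?_⟩
  · intro t x hx
    have hn : ‖x‖ ≠ 0 := norm_ne_zero_iff.mpr hx
    have h := waveAvg_one_deriv ((low hF).of_le one_le_two) (t, ‖x‖ / c)
    simp only [radialAvg, pow_zero]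
    simp only at h
    have e : F (t - ‖x‖ / c) - F (t + ‖x‖ / c) =
        -(‖x‖ / c * waveAvg (fun _ => 1) (deriv F) (t, ‖x‖ / c)) := by rw [h]; ring
    rw [e]
    field_simp
  · intro t
    simp [radialAvg, waveAvg]
    field_simp
    norm_num
  · exact contDiff_const.mul (contDiff_radialAvg hc s1 0)
  · intro t x
    have d1 : ∀ i, spatialDeriv i
        (fun t x => -(1 / (2 * c)) * radialAvg c 0 (deriv F) (t, x)) = fun t x =>
          -(1 / (2 * c)) *
            (radialAvg c 1 (deriv (deriv (deriv F))) (t, x) / 2 / c ^ 2 * x i) := by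
      intro i
      funext t x
      have := ((hasDerivAt_radialAvg_space hc (low s1) 0 t x i).const_mul (-(1 / (2 * c)))).deriv
      simpa [spatialDeriv] using this
    have d2 : ∀ i, spatialDeriv i (fun t x => -(1 / (2 * c)) *
            (radialAvg c 1 (deriv (deriv (deriv F))) (t, x) / 2 / c ^ 2 * x i)) t x =
          -(1 / (2 * c)) * (radialAvg c 1 (deriv (deriv (deriv F))) (t, x) / 2 / c ^ 2 +
            radialAvg c 2 (deriv (deriv (deriv (deriv (deriv F))))) (t, x) / 8 / c ^ 4
              * x i ^ 2) := by
      intro i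
      have h1 := hasDerivAt_radialAvg_space hc (low s3) 1 t x i
      have h2 : HasDerivAt (fun s : ℝ => (x + s • EuclideanSpace.single i (1 : ℝ)) i) 1 0 := by
        simpa using (hasDerivAt_id (0 : ℝ)).const_add (x i)
      have h3 := ((((h1.div_const 2).div_const (c ^ 2)).mul h2).const_mul (-(1 / (2 * c)))).deriv
      refine Eq.trans h3 ?_
      simp only [zero_smul, add_zero, Nat.cast_one]
      ring
    have dt : timeDeriv2 (fun t x => -(1 / (2 * c)) * radialAvg c 0 (deriv F) (t, x)) t x =
        -(1 / (2 * c)) * radialAvg c 0 (deriv (deriv (deriv F))) (t, x) := by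
      have h1 : deriv (fun s => -(1 / (2 * c)) * radialAvg c 0 (deriv F) (s, x)) =
          fun s => -(1 / (2 * c)) * radialAvg c 0 (deriv (deriv F)) (s, x) := by
        funext s
        exact ((hasDerivAt_radialAvg_time hc (low s1) 0 s x).const_mul _).deriv
      simp only [timeDeriv2]
      rw [h1]
      exact ((hasDerivAt_radialAvg_time hc (low s2) 0 t x).const_mul _).deriv
    have hw := waveAvg_wave (low s3) (t, ‖x‖ / c)
    have hx : ‖x‖ ^ 2 = x 0 ^ 2 + x 1 ^ 2 + x 2 ^ 2 := by
      rw [EuclideanSpace.real_norm_sq_eq, Fin.sum_univ_three]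
    rw [dt, spatialLaplacian]
    simp only [d1, d2, Fin.sum_univ_three]
    simp only [radialAvg]
    rw [← hw]
    simp only [div_pow, hx]
    field_simp
    ring
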